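/- arXiv:2401.01320 — 2 statements merged into one kernel-verified Lean document; each statement's English description precedes it below -/
import Mathlib

section
/- For n ≥ 2, there is no uniform bound B such that every element of F_n is a product of at most B primitive elements. That is, for every natural number B there exists w ∈ F_n that cannot be written as a product of B or fewer primitive elements of F_n. Equivalently, the Cayley graph Cay(F_n, C^prim) has infinite diameter. -/
/-- A subgroup `F` of a group `G` is a proper free factor if there is a nontrivial
subgroup `K` such that `G` is the internal free product of `F` and `K`. -/
def IsProperFreeFactor {G : Type*} [Group G] (F : Subgroup G) : Prop :=
  ∃ K : Subgroup G, F ≠ ⊥ ∧ K ≠ ⊥ ∧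
    Function.Bijective (Monoid.Coprod.lift F.subtype K.subtype)

/-- An element of a group is separable if it lies in a proper free factor. -/
def IsSeparableElt {G : Type*} [Group G] (w : G) : Prop :=
  ∃ F : Subgroup G, IsProperFreeFactor F ∧ w ∈ F

/-- An element of the free group `F_n` is primitive if some automorphism carries
a standard generator to it, equivalently it belongs to some basis. -/
def IsPrimitiveElt {n : ℕ} (w : FreeGroup (Fin n)) : Prop :=
  ∃ (φ : FreeGroup (Fin n) ≃* FreeGroup (Fin n)) (i : Fin n), φ (FreeGroup.of i) = w

namespace PrimWidth

open FreeGroup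

section Count
variable {β : Type*} [DecidableEq β]

/-- Number of occurrences of `v` as a contiguous subword. -/
def cnt (v : List β) : List β → ℕ
  | [] => 0
  | a :: L => (if v <+: a :: L then 1 else 0) + cnt v L

lemma cnt_append_ge (v L₁ L₂ : List β) : cnt v L₁ + cnt v L₂ ≤ cnt v (L₁ ++ L₂) := by
  induction L₁ with
  | nil => simp [cnt]
  | cons a L ih =>
    simp only [cnt, List.cons_append]
    by_cases h : v <+: a :: L
    · have h' : v <+: a :: (L ++ L₂) := h.trans ⟨L₂, by simp⟩
      simp only [h, h', if_true]; omega
    · simp only [h, if_false]; omega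

lemma cnt_append_le (v L₁ L₂ : List β) :
    cnt v (L₁ ++ L₂) ≤ cnt v L₁ + cnt v L₂ + min L₁.length v.length := by
  induction L₁ with
  | nil => simp [cnt]
  | cons a L ih =>
    simp only [cnt, List.cons_append]
    by_cases h' : v <+: a :: (L ++ L₂)
    · by_cases hl : v.length ≤ (a :: L).length
      · have h : v <+: a :: L :=
          List.prefix_of_prefix_length_le h' ⟨L₂, by simp⟩ hl
        simp only [h, h', if_true, List.length_cons] at *; omega
      · simp only [h', if_true, List.length_cons] at *
        omega
    · simp only [h', if_false, List.length_cons]; omega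

lemma cnt_eq_zero (v L : List β) (h : ¬ v <:+: L) : cnt v L = 0 := by
  induction L with
  | nil => rfl
  | cons a L ih =>
    have h1 : ¬ v <+: a :: L := fun h' => h h'.isInfix
    have h2 : ¬ v <:+: L := fun h' => h (h'.trans (List.suffix_cons a L).isInfix)
    simp [cnt, h1, ih h2]

lemma cnt_concat (v L : List β) (a : β) (hv : v ≠ []) :
    cnt v (L ++ [a]) = cnt v L + (if v <:+ L ++ [a] then 1 else 0) := by
  induction L with
  | nil =>
    have : v <+: [a] ↔ v <:+ [a] := by
      have hl := List.length_pos_iff.2 hv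
      constructor
      · intro h
        have h1 := h.length_le
        rw [h.eq_of_length (by simp at *; omega)]
      · intro h
        have h1 := h.length_le
        rw [h.eq_of_length (by simp at *; omega)]
    simp [cnt, this]
  | cons b L ih =>
    simp only [List.cons_append, cnt, ih]
    by_cases hl : v.length = (b :: (L ++ [a])).length
    · have e1 : v <+: b :: (L ++ [a]) ↔ v <:+ b :: (L ++ [a]) := by
        constructor
        · intro h; rw [h.eq_of_length hl]
        · intro h; rw [h.eq_of_length hl]
      have e2 : ¬ v <+: b :: L := fun h => by
        have := h.length_le; simp at *; omega
      have e3 : ¬ v <:+ L ++ [a] := fun h => by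
        have := h.length_le; simp at *; omega
      simp only [e1, e2, e3, if_false]; omega
    · have e1 : v <+: b :: (L ++ [a]) ↔ v <+: b :: L := by
        constructor
        · intro h
          refine List.prefix_of_prefix_length_le h ⟨[a], by simp⟩ ?_
          have := h.length_le; simp at *; omega
        · intro h; exact h.trans ⟨[a], by simp⟩
      have e2 : v <:+ b :: (L ++ [a]) ↔ v <:+ L ++ [a] := by
        constructor
        · intro h
          refine List.suffix_of_suffix_length_le h (List.suffix_cons _ _) ?_
          have := h.length_le; simp at *; omega
        · intro h; exact h.trans (List.suffix_cons _ _)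
      simp only [e1, e2]; omega

end Count

section Words
variable {α : Type*} [DecidableEq α]

lemma invRev_prefix {v L : List (α × Bool)} : invRev v <+: invRev L ↔ v <:+ L := by
  constructor
  · rintro ⟨t, ht⟩
    refine ⟨invRev t, ?_⟩
    apply invRev_injective
    simp [invRev_append, ht]
  · rintro ⟨t, rfl⟩
    exact ⟨invRev t, by simp [invRev_append]⟩

lemma cnt_invRev (v L : List (α × Bool)) (hv : v ≠ []) :
    cnt (invRev v) (invRev L) = cnt v L := by
  induction L using List.reverseRecOn with
  | nil => simp [cnt]
  | append_singleton L a ih =>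
    have e : invRev (L ++ [a]) = (a.1, !a.2) :: invRev L := by simp [invRev]
    rw [cnt_concat v L a hv, ← ih, e, cnt, ← e]
    simp only [invRev_prefix]
    omega

lemma isReduced_invRev {L : List (α × Bool)} (h : IsReduced L) : IsReduced (invRev L) := by
  rw [isReduced_iff_reduce_eq] at *
  rw [reduce_invRev, h]

lemma invRev_flatten (L : List (α × Bool)) (k : ℕ) :
    invRev (List.replicate k L).flatten = (List.replicate k (invRev L)).flatten := by
  induction k with
  | zero => simp
  | succ k ih =>
    rw [List.replicate_succ, List.flatten_cons, invRev_append, ih, List.replicate_succ',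
      List.flatten_append]
    simp

lemma toWord_mk_of_isReduced {L : List (α × Bool)} (h : IsReduced L) : (mk L).toWord = L := by
  rw [toWord_mk, h.reduce_eq]

lemma cancel_lists (L₁ : List (α × Bool)) : ∀ (L₂ : List (α × Bool)), IsReduced L₁ →
    IsReduced L₂ → ∃ a b c, L₁ = a ++ b ∧ L₂ = invRev b ++ c ∧ IsReduced (a ++ c) := by
  induction L₁ using List.reverseRecOn with
  | nil => intro L₂ _ h2; exact ⟨[], [], L₂, by simp, by simp, by simpa using h2⟩
  | append_singleton L x ih =>
    intro L₂ h1 h2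
    by_cases hr : IsReduced (L ++ [x] ++ L₂)
    · exact ⟨L ++ [x], [], L₂, by simp, by simp, hr⟩
    · cases L₂ with
      | nil => exact absurd (by simpa using h1) hr
      | cons y M =>
        have hxy : y = (x.1, !x.2) := by
          by_contra hne
          apply hr
          unfold FreeGroup.IsReduced
          rw [List.isChain_append]
          refine ⟨h1, h2, ?_⟩
          intro p hp q hq hpq
          simp at hp hq
          subst hp hq
          by_contra hb
          apply hne
          ext
          · exact hpq.symm
          · rcases x with ⟨x1, x2⟩; rcases y with ⟨y1, y2⟩
            simp at hb ⊢
            cases x2 <;> cases y2 <;> simp_all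
        obtain ⟨a, b, c, e1, e2, e3⟩ := ih M (h1.infix ⟨[], [x], by simp⟩)
          (h2.infix ⟨[y], [], by simp⟩)
        refine ⟨a, b ++ [x], c, by simp [e1], ?_, e3⟩
        rw [hxy, e2]; simp [invRev]

lemma cancel (g h : FreeGroup α) : ∃ a b c, g.toWord = a ++ b ∧ h.toWord = invRev b ++ c ∧
    (g * h).toWord = a ++ c := by
  obtain ⟨a, b, c, e1, e2, e3⟩ := cancel_lists g.toWord h.toWord isReduced_toWord isReduced_toWord
  refine ⟨a, b, c, e1, e2, ?_⟩
  rw [← toWord_mk_of_isReduced e3]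
  congr 1
  rw [← mk_toWord (x := g), ← mk_toWord (x := h), e1, e2]
  simp only [← mul_mk, ← inv_mk]
  group

/-- Brooks counting function on words. -/
def lf (v L : List (α × Bool)) : ℤ := (cnt v L : ℤ) - cnt (invRev v) L

lemma lf_append (v L₁ L₂ : List (α × Bool)) :
    |lf v (L₁ ++ L₂) - lf v L₁ - lf v L₂| ≤ v.length := by
  have h1 := cnt_append_ge v L₁ L₂
  have h2 := cnt_append_le v L₁ L₂
  have h3 := cnt_append_ge (invRev v) L₁ L₂
  have h4 := cnt_append_le (invRev v) L₁ L₂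
  rw [invRev_length] at h4
  unfold lf
  rw [abs_le]
  omega

lemma lf_invRev (v L : List (α × Bool)) (hv : v ≠ []) : lf v (invRev L) = - lf v L := by
  unfold lf
  have h1 := cnt_invRev v L hv
  have h2 := cnt_invRev (invRev v) L (by
    intro h; apply hv; apply invRev_injective; simpa using h)
  rw [invRev_invRev] at h2
  omega

lemma lf_mul (v : List (α × Bool)) (hv : v ≠ []) (g h : FreeGroup α) :
    |lf v (g * h).toWord - lf v g.toWord - lf v h.toWord| ≤ 3 * v.length := by
  obtain ⟨a, b, c, e1, e2, e3⟩ := cancel g h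
  rw [e1, e2, e3]
  have h1 := lf_append v a c
  have h2 := lf_append v a b
  have h3 := lf_append v (invRev b) c
  rw [lf_invRev v b hv] at h3
  rw [abs_le] at *
  omega

/-- Existence of a nontrivial almost invariant set fixed by `p`. -/
def Q {G : Type*} [Group G] (p : G) : Prop :=
  ∃ A : Set G, A.Infinite ∧ Aᶜ.Infinite ∧ (∀ g, g * p ∈ A ↔ g ∈ A) ∧
    ∀ x, {g | ¬ (g * x ∈ A ↔ g ∈ A)}.Finite

lemma Q.map {G : Type*} [Group G] {p : G} (h : Q p) (φ : G ≃* G) : Q (φ p) := by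
  obtain ⟨A, h1, h2, h3, h4⟩ := h
  refine ⟨φ.symm ⁻¹' A, ?_, ?_, ?_, ?_⟩
  · exact h1.preimage (by simp [φ.symm.surjective.range_eq])
  · rw [← Set.preimage_compl]
    exact h2.preimage (by simp [φ.symm.surjective.range_eq])
  · intro g; simp [h3]
  · intro x
    refine ((h4 (φ.symm x)).preimage (f := φ.symm) φ.symm.injective.injOn).subset ?_
    intro g hg
    simpa using hg

lemma Q.inv {G : Type*} [Group G] {p : G} (h : Q p) : Q p⁻¹ := by
  obtain ⟨A, h1, h2, h3, h4⟩ := h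
  refine ⟨A, h1, h2, fun g => ?_, h4⟩
  rw [← h3]; simp

lemma Q_of [Finite α] (i j : α) (hij : i ≠ j) : Q (of i : FreeGroup α) := by
  refine ⟨{g | g.toWord.head? = some (j, true)}, ?_, ?_, ?_, ?_⟩
  · refine Set.infinite_of_injective_forall_mem (f := fun k : ℕ => (of j : FreeGroup α) ^ (k + 1))
      ?_ ?_
    · intro a b hab
      have := congrArg (fun g => g.toWord.length) hab
      simpa using this
    · intro k; simp [toWord_of_pow, List.replicate_succ]
  · refine Set.infinite_of_injective_forall_mem (f := fun k : ℕ => (of i : FreeGroup α) ^ (k + 1))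
      ?_ ?_
    · intro a b hab
      have := congrArg (fun g => g.toWord.length) hab
      simpa using this
    · intro k; simp [toWord_of_pow, List.replicate_succ, hij]
  · intro g
    obtain ⟨a, b, c, e1, e2, e3⟩ := cancel g (of i)
    simp only [Set.mem_ofPred_eq, e1, e3]
    cases a with
    | cons x a => simp
    | nil =>
      rw [toWord_of] at e2
      rcases b with _ | ⟨x, b⟩
      · simp at e2; subst e2; simp [hij]
      · have hl := congrArg List.length e2
        simp at hl
        have hb : b = [] := List.length_eq_zero_iff.1 (by omega)
        have hc : c = [] := List.length_eq_zero_iff.1 (by omega)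
        subst hb hc
        rcases x with ⟨x1, x2⟩
        simp [invRev] at e2
        simp [← e2.2]
  · intro x
    refine ((List.finite_length_le (α × Bool) x.toWord.length).preimage
      (f := toWord) toWord_injective.injOn).subset ?_
    intro g hg
    by_contra hlt
    simp at hlt
    apply hg
    obtain ⟨a, b, c, e1, e2, e3⟩ := cancel g x
    simp only [Set.mem_ofPred_eq, e1, e3]
    cases a with
    | cons x a => simp
    | nil => rw [e1, e2] at hlt; simp at hlt

/-- Elements whose reduced word starts with `L`. -/
def cone (L : List (α × Bool)) : Set (FreeGroup α) := {g | L <+: g.toWord}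

lemma infinite_ray {u a b L : List (α × Bool)} {x : α × Bool} (hu : u = a ++ x :: b)
    (hr : ∀ k : ℕ, IsReduced (List.replicate k u).flatten) (hL : IsReduced (L ++ [x]))
    (S : Set (FreeGroup α)) (hS : ∀ k : ℕ, mk L * mk (x :: b) * (mk u) ^ k ∈ S) :
    (cone (L ++ [x]) ∩ S).Infinite := by
  have key : ∀ k : ℕ, (mk L * mk (x :: b) * (mk u) ^ k).toWord =
      L ++ [x] ++ (b ++ (List.replicate k u).flatten) := by
    intro k
    have : IsReduced (L ++ [x] ++ (b ++ (List.replicate k u).flatten)) := by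
      refine IsReduced.append_overlap hL ?_ (by simp)
      refine (hr (k + 1)).infix ⟨a, [], ?_⟩
      rw [List.replicate_succ, List.flatten_cons]
      conv_rhs => rw [hu]
      simp [hu]
    rw [← toWord_mk_of_isReduced this, pow_mk, mul_mk, mul_mk]
    simp
  refine Set.infinite_of_injective_forall_mem
    (f := fun k : ℕ => mk L * mk (x :: b) * (mk u) ^ k) ?_ ?_
  · intro k l hkl
    have := congrArg (fun g => g.toWord.length) hkl
    simp only [key] at this
    simp [hu] at this
    exact this
  · intro k
    refine ⟨?_, hS k⟩
    show _ <+: _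
    rw [key]
    exact List.prefix_append _ _

lemma not_Q [Fintype α] [Nontrivial α] (u : List (α × Bool)) (hu : IsCyclicallyReduced u)
    (hall : ∀ i j : α, [(j, true), (i, true)] <:+: u) : ¬ Q (mk u) := by
  rintro ⟨A, hA1, hA2, hAu, hAx⟩
  have hr : ∀ k : ℕ, IsReduced (List.replicate k u).flatten := fun k =>
    (hu.flatten_replicate k).isReduced
  have hr' : ∀ k : ℕ, IsReduced (List.replicate k (invRev u)).flatten := fun k => by
    rw [← invRev_flatten]; exact isReduced_invRev (hr k)
  have hpow : ∀ (k : ℕ) g, g * (mk u) ^ k ∈ A ↔ g ∈ A := by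
    intro k
    induction k with
    | zero => simp
    | succ k ih => intro g; rw [pow_succ, ← mul_assoc, hAu, ih]
  have hpow' : ∀ (k : ℕ) g, g * (mk (invRev u)) ^ k ∈ A ↔ g ∈ A := by
    intro k g
    rw [← hpow k (g * _), ← inv_mk, mul_assoc, inv_pow, inv_mul_cancel, mul_one]
  -- the main dichotomy
  have edge : ∀ (L : List (α × Bool)) (i j : α), IsReduced (L ++ [(i, true)]) →
      IsReduced (L ++ [(j, false)]) →
      ((cone (L ++ [(i, true)]) ∩ A).Infinite ∧ (cone (L ++ [(j, false)]) ∩ A).Infinite) ∨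
      ((cone (L ++ [(i, true)]) ∩ Aᶜ).Infinite ∧ (cone (L ++ [(j, false)]) ∩ Aᶜ).Infinite) := by
    intro L i j hi hj
    obtain ⟨a, b, hab⟩ := hall i j
    have e1 : u = (a ++ [(j, true)]) ++ (i, true) :: b := by rw [← hab]; simp
    have e2 : invRev u = (invRev b ++ [(i, false)]) ++ (j, false) :: invRev a := by
      rw [← hab]; simp [invRev]
    have e3 : mk L * mk ((j, false) :: invRev a) * mk u = mk L * mk ((i, true) :: b) := by
      have t1 : mk ((j, false) :: invRev a) = (mk (a ++ [(j, true)]))⁻¹ := by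
        rw [inv_mk]; simp [invRev]
      rw [t1, e1, ← mul_mk (L₁ := a ++ [(j, true)])]; group
    have e4 : mk L * mk ((i, true) :: b) ∈ A ↔ mk L * mk ((j, false) :: invRev a) ∈ A := by
      rw [← e3, hAu]
    by_cases h : mk L * mk ((i, true) :: b) ∈ A
    · left
      refine ⟨infinite_ray e1 hr hi A fun k => ?_, infinite_ray e2 hr' hj A fun k => ?_⟩
      · rw [hpow]; exact h
      · rw [hpow']; exact e4.1 h
    · right
      refine ⟨infinite_ray e1 hr hi Aᶜ fun k => ?_, infinite_ray e2 hr' hj Aᶜ fun k => ?_⟩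
      · rw [Set.mem_compl_iff, hpow]; exact h
      · rw [Set.mem_compl_iff, hpow', ← e4]; exact h
  have empt : ∀ L : List (α × Bool), ¬ IsReduced L → cone L = ∅ := by
    intro L hL
    ext g
    simp only [Set.mem_empty_iff_false, iff_false]
    intro hg
    exact hL (isReduced_toWord.infix (List.IsPrefix.isInfix hg))
  have step : ∀ R : ℕ, (∀ L : List (α × Bool), L.length = R + 1 →
      (cone L ∩ A).Finite ∨ (cone L ∩ Aᶜ).Finite) →
      ∀ L : List (α × Bool), L.length = R → (cone L ∩ A).Finite ∨ (cone L ∩ Aᶜ).Finite := by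
    intro R hR L hL
    by_cases hred : IsReduced L
    swap
    · left; rw [empt L hred]; simp
    have hx : ∀ x, (cone (L ++ [x]) ∩ A).Finite ∨ (cone (L ++ [x]) ∩ Aᶜ).Finite :=
      fun x => hR _ (by simp [hL])
    have hm : ∃ m : α, ∀ s, IsReduced (L ++ [(m, s)]) := by
      rcases List.eq_nil_or_concat L with rfl | ⟨M, y, rfl⟩
      · obtain ⟨m⟩ : Nonempty α := inferInstance
        exact ⟨m, fun s => by simp⟩
      · obtain ⟨m, hm⟩ := exists_ne y.1
        refine ⟨m, fun s => ?_⟩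
        unfold FreeGroup.IsReduced
        rw [List.isChain_append]
        refine ⟨hred, by simp, ?_⟩
        intro p hp q hq hpq
        simp at hp hq
        subst hp hq
        exact absurd hpq.symm hm
    obtain ⟨m, hm⟩ := hm
    have cov : ∀ S : Set (FreeGroup α), (∀ x, (cone (L ++ [x]) ∩ S).Finite) →
        (cone L ∩ S).Finite := by
      intro S hS
      refine ((Set.finite_singleton (mk L)).union (Set.finite_iUnion hS)).subset ?_
      rintro g ⟨⟨t, ht⟩, hgS⟩
      rcases t with _ | ⟨x, t⟩
      · left
        rw [Set.mem_singleton_iff, ← mk_toWord (x := g), ← ht]; simp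
      · right
        rw [Set.mem_iUnion]
        exact ⟨x, ⟨t, by rw [← ht]; simp⟩, hgS⟩
    -- all agree
    have agree : ∀ S T : Set (FreeGroup α),
        (∀ x, (cone (L ++ [x]) ∩ S).Finite ∨ (cone (L ++ [x]) ∩ T).Finite) →
        (∀ i j, IsReduced (L ++ [(i, true)]) → IsReduced (L ++ [(j, false)]) →
        ((cone (L ++ [(i, true)]) ∩ S).Infinite ∧ (cone (L ++ [(j, false)]) ∩ S).Infinite) ∨
        ((cone (L ++ [(i, true)]) ∩ T).Infinite ∧ (cone (L ++ [(j, false)]) ∩ T).Infinite)) →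
        (cone (L ++ [(m, true)]) ∩ S).Finite → ∀ x, (cone (L ++ [x]) ∩ S).Finite := by
      intro S T hST hE hmS
      have hneg : ∀ j, IsReduced (L ++ [(j, false)]) → (cone (L ++ [(j, false)]) ∩ S).Finite := by
        intro j hj
        rcases hE m j (hm true) hj with h | h
        · exact absurd hmS h.1
        · exact (hST _).resolve_right h.2
      rintro ⟨x, s⟩
      by_cases hxr : IsReduced (L ++ [(x, s)])
      swap
      · rw [empt _ hxr]; simp
      cases s with
      | false => exact hneg x hxr
      | true =>
        rcases hE x m hxr (hm false) with h | h
        · exact absurd (hneg m (hm false)) h.2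
        · exact (hST _).resolve_right h.1
    rcases hx (m, true) with h | h
    · left
      exact cov _ (agree A Aᶜ hx (edge L) h)
    · right
      exact cov _ (agree Aᶜ A (fun x => (hx x).symm) (fun i j hi hj => (edge L i j hi hj).symm) h)
  -- base case
  have base : ∃ R : ℕ, ∀ L : List (α × Bool), L.length = R →
      (cone L ∩ A).Finite ∨ (cone L ∩ Aᶜ).Finite := by
    have hfin : (⋃ x : α × Bool, {g | ¬ (g * mk [x] ∈ A ↔ g ∈ A)}).Finite :=
      Set.finite_iUnion fun x => hAx _
    obtain ⟨R, hR⟩ := (hfin.image (fun g => g.toWord.length)).bddAbove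
    refine ⟨R + 1, fun L hL => ?_⟩
    have hmem : ∀ t : List (α × Bool), IsReduced (L ++ t) → (mk (L ++ t) ∈ A ↔ mk L ∈ A) := by
      intro t
      induction t using List.reverseRecOn with
      | nil => simp
      | append_singleton t x ih =>
        intro ht
        have ht' : IsReduced (L ++ t) := ht.infix ⟨[], [x], by simp⟩
        rw [← ih ht', ← List.append_assoc, ← mul_mk]
        by_contra hcon
        have := hR ⟨mk (L ++ t), Set.mem_iUnion.2 ⟨x, hcon⟩, rfl⟩
        simp only [toWord_mk_of_isReduced ht'] at this
        simp at this
        omega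
    have hmem' : ∀ g ∈ cone L, (g ∈ A ↔ mk L ∈ A) := by
      rintro g ⟨t, ht⟩
      rw [← hmem t (by rw [ht]; exact isReduced_toWord), ht, mk_toWord]
    by_cases h : mk L ∈ A
    · right
      convert Set.finite_empty
      ext g
      simp only [Set.mem_inter_iff, Set.mem_compl_iff, Set.mem_empty_iff_false, iff_false, not_and,
        not_not]
      intro hg; exact (hmem' g hg).2 h
    · left
      convert Set.finite_empty
      ext g
      simp only [Set.mem_inter_iff, Set.mem_empty_iff_false, iff_false, not_and]
      intro hg hgA; exact h ((hmem' g hg).1 hgA)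
  obtain ⟨R, hR⟩ := base
  have fin0 : ∀ L : List (α × Bool), L.length = 0 →
      (cone L ∩ A).Finite ∨ (cone L ∩ Aᶜ).Finite := by
    induction R with
    | zero => exact hR
    | succ R ih => exact ih (step R hR)
  have hc : cone ([] : List (α × Bool)) = Set.univ := by
    ext g; simp [cone]
  have := fin0 [] rfl
  rw [hc, Set.univ_inter, Set.univ_inter] at this
  rcases this with h | h
  · exact hA1 h
  · exact hA2 h

end Words

/-- The universal positive word. -/
def vv (n : ℕ) : List (Fin n × Bool) :=
  (List.finRange n).flatMap fun j => (List.finRange n).flatMap fun i => [(j, true), (i, true)]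

lemma infix_flatMap {α β : Type*} (f : α → List β) (l : List α) (a : α) (ha : a ∈ l) :
    f a <:+: l.flatMap f := by
  obtain ⟨s, t, rfl⟩ := List.append_of_mem ha
  exact ⟨s.flatMap f, t.flatMap f, by simp⟩

lemma vv_infix (n : ℕ) (i j : Fin n) : [(j, true), (i, true)] <:+: vv n := by
  unfold vv
  exact (infix_flatMap (fun i : Fin n => [(j, true), (i, true)]) _ i (List.mem_finRange i)).trans
    (infix_flatMap (fun j : Fin n => (List.finRange n).flatMap fun i => [(j, true), (i, true)])
      _ j (List.mem_finRange j))

lemma vv_pos (n : ℕ) : ∀ x ∈ vv n, x.2 = true := by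
  intro x hx
  simp [vv] at hx
  obtain ⟨a, b, h | h⟩ := hx <;> simp [h]

lemma prim_Q {n : ℕ} (hn : 2 ≤ n) {p : FreeGroup (Fin n)} (hp : IsPrimitiveElt p) : Q p := by
  obtain ⟨φ, i, rfl⟩ := hp
  haveI : Nontrivial (Fin n) := Fin.nontrivial_iff_two_le.2 hn
  obtain ⟨j, hj⟩ := exists_ne i
  exact (Q_of i j hj.symm).map φ

lemma prim_bound {n : ℕ} (hn : 2 ≤ n) (hv : vv n ≠ []) {p : FreeGroup (Fin n)}
    (hp : IsPrimitiveElt p) : |lf (vv n) p.toWord| ≤ 6 * (vv n).length := by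
  haveI : Nontrivial (Fin n) := Fin.nontrivial_iff_two_le.2 hn
  set u := reduceCyclically p.toWord with hu
  set g : FreeGroup (Fin n) := mk (reduceCyclically.conjugator p.toWord) with hg
  have hcyc : IsCyclicallyReduced u := reduceCyclically.isCyclicallyReduced isReduced_toWord
  have hpu : p = g * mk u * g⁻¹ := by
    rw [hg, inv_mk, mul_mk, mul_mk, reduceCyclically.conj_conjugator_reduceCyclically, mk_toWord]
  have hQ : Q (mk u) := by
    have := (prim_Q hn hp).map (MulAut.conj g⁻¹)
    convert this using 1
    rw [hpu]; simp [mul_assoc]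
  have z1 : ¬ vv n <:+: u := fun h =>
    not_Q u hcyc (fun i j => (vv_infix n i j).trans h) hQ
  have hcyc' : IsCyclicallyReduced (invRev u) := by
    refine ⟨isReduced_invRev hcyc.1, ?_⟩
    intro a ha b hb hab
    have h1 := hcyc.2 (b.1, !b.2) (by
      simp [invRev] at hb ⊢
      obtain ⟨c, ⟨hc, rfl⟩ | ⟨hc, rfl⟩⟩ := hb <;> simpa using hc) (a.1, !a.2) (by
      simp [invRev] at ha ⊢
      obtain ⟨c, ⟨hc, rfl⟩ | ⟨hc, rfl⟩⟩ := ha <;> simpa using hc) hab.symm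
    simpa using h1.symm
  have z2 : ¬ invRev (vv n) <:+: u := fun h => by
    have h' : vv n <:+: invRev u := by
      obtain ⟨s, t, hst⟩ := h
      exact ⟨invRev t, invRev s, by rw [← hst]; simp [invRev_append]⟩
    refine not_Q (invRev u) hcyc' (fun i j => (vv_infix n i j).trans h') ?_
    rw [← inv_mk]; exact hQ.inv
  have hz : lf (vv n) (mk u).toWord = 0 := by
    rw [toWord_mk_of_isReduced hcyc.1, lf, cnt_eq_zero _ _ z1, cnt_eq_zero _ _ z2]; simp
  have b1 := lf_mul (vv n) hv (g * mk u) g⁻¹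
  have b2 := lf_mul (vv n) hv g (mk u)
  rw [toWord_inv, lf_invRev _ _ hv, ← hpu] at b1
  rw [abs_le] at *
  omega

lemma prod_bound {n : ℕ} (hn : 2 ≤ n) (hv : vv n ≠ []) (l : List (FreeGroup (Fin n)))
    (hl : ∀ a ∈ l, IsPrimitiveElt a) :
    |lf (vv n) l.prod.toWord| ≤ l.length * (9 * (vv n).length) := by
  induction l with
  | nil => simp [lf, cnt]
  | cons a l ih =>
    have h1 := ih fun b hb => hl b (by simp [hb])
    have h2 := prim_bound hn hv (hl a (by simp))
    have h3 := lf_mul (vv n) hv a l.prod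
    rw [List.prod_cons, List.length_cons]
    push_cast
    rw [add_mul]
    rw [abs_le] at *
    constructor <;> linarith [h1.1, h1.2, h2.1, h2.2, h3.1, h3.2]

lemma cnt_pow_ge {β : Type*} [DecidableEq β] (v : List β) (hv : v ≠ []) (k : ℕ) :
    k ≤ cnt v (List.replicate k v).flatten := by
  induction k with
  | zero => simp
  | succ k ih =>
    rw [List.replicate_succ, List.flatten_cons]
    have h1 := cnt_append_ge v v (List.replicate k v).flatten
    have h2 : 1 ≤ cnt v v := by
      cases v with
      | nil => exact absurd rfl hv
      | cons a L => simp [cnt]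
    omega

end PrimWidth

/-- For `n ≥ 2`, there is no uniform bound on the number of primitive factors
needed to express elements of `F_n`. -/
theorem no_uniform_primitive_bound (n : ℕ) (hn : 2 ≤ n) (B : ℕ) :
    ∃ w : FreeGroup (Fin n),
      ¬∃ l : List (FreeGroup (Fin n)),
        l.length ≤ B ∧ (∀ a ∈ l, IsPrimitiveElt a) ∧ l.prod = w := by
  classical
  have hv : PrimWidth.vv n ≠ [] := by
    intro h
    have := PrimWidth.vv_infix n ⟨0, by omega⟩ ⟨0, by omega⟩
    rw [h] at this
    simp at this
  set v := PrimWidth.vv n with hvdef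
  set K := B * (9 * v.length) + 1 with hK
  set W := (List.replicate K v).flatten with hW
  have hpos : ∀ x ∈ W, x.2 = true := by
    intro x hx
    rw [hW, List.mem_flatten] at hx
    obtain ⟨l, hl, hxl⟩ := hx
    rw [List.eq_of_mem_replicate hl] at hxl
    exact PrimWidth.vv_pos n x hxl
  have hred : FreeGroup.IsReduced W := by
    unfold FreeGroup.IsReduced
    rw [List.isChain_iff_forall_rel_of_append_cons_cons]
    intro a b l₁ l₂ h _
    rw [hpos a (by rw [h]; simp), hpos b (by rw [h]; simp)]
  refine ⟨FreeGroup.mk W, ?_⟩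
  rintro ⟨l, hlB, hl, hprod⟩
  have h1 := PrimWidth.prod_bound hn hv l hl
  rw [hprod, PrimWidth.toWord_mk_of_isReduced hred] at h1
  have h2 := PrimWidth.cnt_pow_ge v hv K
  have h3 : PrimWidth.cnt (FreeGroup.invRev v) W = 0 := by
    apply PrimWidth.cnt_eq_zero
    intro h
    obtain ⟨x, hx⟩ := List.exists_mem_of_ne_nil v hv
    have h4 : (x.1, !x.2) ∈ FreeGroup.invRev v := by
      simp only [FreeGroup.invRev, List.mem_reverse, List.mem_map]
      exact ⟨x, hx, rfl⟩
    have h5 := hpos _ (h.subset h4)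
    have h6 := PrimWidth.vv_pos n x hx
    simp [h6] at h5
  have h7 : (l.length : ℤ) * (9 * (v.length : ℤ)) ≤ B * (9 * v.length) := by
    gcongr
  have h8 : ((K : ℕ) : ℤ) = B * (9 * v.length) + 1 := by rw [hK]; push_cast; ring
  have h9 := (abs_le.1 h1).2
  unfold PrimWidth.lf at h9
  rw [h3] at h9
  have h10 : (K : ℤ) ≤ PrimWidth.cnt v W := by exact_mod_cast h2
  simp only [← hvdef] at h9
  push_cast at h9
  linarith
end

section
/- For n ≥ 2, there is no uniform bound B such that every element of F_n is a product of at most B separable elements; equivalently, the word metric on F_n with respect to the set of nontrivial separable elements is unbounded. -/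
/-! ### An almost invariant set attached to a proper free factor -/

/-- An almost invariant set whose two ends on every `g`-orbit agree. -/
def SepWitness {G : Type*} [Group G] (g : G) (A : Set G) : Prop :=
  (∀ s : G, {v : G | ¬(s * v ∈ A ↔ v ∈ A)}.Finite) ∧ A.Infinite ∧ Aᶜ.Infinite ∧
    ∀ v, g * v ∈ A ↔ v ∈ A

theorem SepWitness.conj {G : Type*} [Group G] {g : G} {A : Set G} (h : SepWitness g A) (p : G) :
    SepWitness (p⁻¹ * g * p) {v | p * v ∈ A} := by
  obtain ⟨h1, h2, h3, h4⟩ := h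
  have hinj : Function.Injective (fun v : G => p * v) := fun a b hab => mul_left_cancel hab
  have hsurj : Set.range (fun v : G => p * v) = Set.univ :=
    Set.range_eq_univ.2 fun b => ⟨p⁻¹ * b, by simp⟩
  refine ⟨fun s => ?_, ?_, ?_, ?_⟩
  · refine ((h1 (p * s * p⁻¹)).preimage (hinj.injOn)).subset ?_
    intro v hv
    simpa [mul_assoc] using hv
  · exact h2.preimage (f := fun v : G => p * v) (by rw [hsurj]; exact Set.subset_univ _)
  · exact h3.preimage (f := fun v : G => p * v) (by rw [hsurj]; exact Set.subset_univ _)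
  · intro v
    have := h4 (p * v)
    simpa [mul_assoc] using this

theorem SepWitness.inv {G : Type*} [Group G] {g : G} {A : Set G} (h : SepWitness g A) :
    SepWitness g⁻¹ A := by
  obtain ⟨h1, h2, h3, h4⟩ := h
  refine ⟨h1, h2, h3, fun v => ?_⟩
  have := h4 (g⁻¹ * v)
  simpa using this.symm

theorem SepWitness.pow {G : Type*} [Group G] {g : G} {A : Set G} (h : SepWitness g A) (k : ℕ)
    (v : G) : g ^ k * v ∈ A ↔ v ∈ A := by
  induction k with
  | zero => simp
  | succ k ih => rw [pow_succ', mul_assoc, h.2.2.2, ih]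

open scoped Classical in
/-- indicator of the identity -/
noncomputable def idInd {G : Type*} [Group G] (g : G) : ℤ := if g = 1 then 1 else 0

/-- action of the first factor -/
def actF {G : Type*} [Group G] (F : Subgroup G) : F →* Equiv.Perm (G × ℤ) where
  toFun f :=
    { toFun := fun p => (f * p.1, p.2)
      invFun := fun p => ((f : G)⁻¹ * p.1, p.2)
      left_inv := fun p => by simp
      right_inv := fun p => by simp }
  map_one' := by ext p <;> simp
  map_mul' a b := by ext p <;> simp [mul_assoc]

/-- action of the second factor -/
noncomputable def actK {G : Type*} [Group G] (F : Subgroup G) : F →* Equiv.Perm (G × ℤ) where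
  toFun f :=
    { toFun := fun p => (f * p.1, p.2 + idInd ((f : G) * p.1) - idInd p.1)
      invFun := fun p => ((f : G)⁻¹ * p.1, p.2 + idInd ((f : G)⁻¹ * p.1) - idInd p.1)
      left_inv := fun p => by simp
      right_inv := fun p => by simp }
  map_one' := by ext p <;> simp
  map_mul' a b := by
    ext p
    · simp [mul_assoc]
    · simp only [Subgroup.coe_mul, mul_assoc, Equiv.coe_fn_mk, Equiv.Perm.coe_mul,
        Function.comp_apply]
      ring

theorem exists_potential {G : Type*} [Group G] (F K : Subgroup G)
    (hb : Function.Bijective (Monoid.Coprod.lift F.subtype K.subtype)) :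
    ∃ ψ : G → ℤ, ψ 1 = 0 ∧ (∀ f ∈ F, ∀ g, ψ (f * g) = ψ g) ∧
      (∀ k ∈ K, ∀ g, ψ (k * g) = ψ g + idInd (k * g) - idInd g) := by
  let e : Monoid.Coprod F K ≃* G := MulEquiv.ofBijective _ hb
  let r : Monoid.Coprod F K →* Equiv.Perm (G × ℤ) := Monoid.Coprod.lift (actF F) (actK K)
  have hr : ∀ x p, (r x p).1 = e x * p.1 := by
    intro x
    induction x using Monoid.Coprod.induction_on with
    | inl f => intro p; simp [r, e, actF]
    | inr f => intro p; simp [r, e, actK]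
    | mul x y hx hy =>
      intro p
      rw [map_mul, map_mul, Equiv.Perm.mul_apply, hx, hy, mul_assoc]
  have hr' : ∀ g p, (r (e.symm g) p).1 = g * p.1 := by intro g p; simp [hr]
  refine ⟨fun g => (r (e.symm g) (1, 0)).2, ?_, ?_, ?_⟩
  · simp
  · intro f hf g
    have h1 : e.symm f = Monoid.Coprod.inl ⟨f, hf⟩ := by
      rw [MulEquiv.symm_apply_eq]; simp [e]
    simp only [map_mul, Equiv.Perm.mul_apply]
    rw [h1]
    simp [r, actF]
  · intro f hf g
    have h1 : e.symm f = Monoid.Coprod.inr ⟨f, hf⟩ := by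
      rw [MulEquiv.symm_apply_eq]; simp [e]
    have h2 := hr' g (1, 0)
    simp only [map_mul, Equiv.Perm.mul_apply]
    generalize r (e.symm g) (1, 0) = q at *
    rw [h1]
    simp only [mul_one] at h2
    simp [r, actK, h2]

theorem exists_sepWitness {G : Type*} [Group G] [IsMulTorsionFree G] {g : G}
    (hg : IsSeparableElt g) : ∃ A : Set G, SepWitness g A := by
  obtain ⟨F, ⟨K, hF, hK, hb⟩, hgF⟩ := hg
  obtain ⟨ψ, h1, hψF, hψK⟩ := exists_potential F K hb
  have inf : ∀ H : Subgroup G, H ≠ ⊥ → ((H : Set G) \ {1}).Infinite := by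
    intro H hH
    obtain ⟨x, hx, hx1⟩ := H.bot_or_exists_ne_one.resolve_left hH
    refine Set.Infinite.sdiff ?_ (Set.finite_singleton 1)
    refine Set.infinite_of_injective_forall_mem (f := fun n : ℕ => (x : G) ^ n) ?_
      fun n => H.pow_mem hx n
    exact injective_pow_iff_not_isOfFinOrder.2 (not_isOfFinOrder_of_isMulTorsionFree hx1)
  refine ⟨{v | ψ v = 0}, ?_, ?_, ?_, ?_⟩
  · have key : ∀ x : Monoid.Coprod F K,
        {v : G | ψ (Monoid.Coprod.lift F.subtype K.subtype x * v) ≠ ψ v}.Finite := by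
      intro x
      induction x using Monoid.Coprod.induction_on with
      | inl f =>
        convert Set.finite_empty
        ext v
        simp [hψF f f.2]
      | inr k =>
        refine (Set.toFinite ({1, (k : G)⁻¹} : Set G)).subset ?_
        intro v hv
        by_contra hc
        simp only [Set.mem_insert_iff, Set.mem_singleton_iff, not_or] at hc
        apply hv
        have : (k : G) * v ≠ 1 := fun h => hc.2 (eq_inv_of_mul_eq_one_right h)
        simp [hψK k k.2, idInd, hc.1, this]
      | mul x y hx hy =>
        refine (hy.union (hx.preimage (f := fun v =>
          Monoid.Coprod.lift F.subtype K.subtype y * v)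
          (fun a _ b _ hab => mul_left_cancel hab))).subset ?_
        intro v hv
        by_contra hc
        simp only [Set.mem_union, Set.mem_ofPred_eq, Set.mem_preimage, not_or, not_not] at hc
        apply hv
        rw [map_mul, mul_assoc, hc.2, hc.1]
    intro s
    obtain ⟨x, rfl⟩ := hb.2 s
    refine (key x).subset ?_
    intro v hv h
    apply hv
    simp [h]
  · refine (inf F hF).mono ?_
    rintro f ⟨hf, -⟩
    have := hψF f hf 1
    simpa [h1] using this
  · refine (inf K hK).mono ?_
    rintro k ⟨hk, hk1⟩
    have := hψK k hk 1
    have hk1' : k ≠ 1 := hk1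
    simp [h1, idInd, hk1'] at this
    simp [this]
  · intro v
    simp [hψF g hgF]

/-! ### The cut vertex lemma -/

section Cut

open FreeGroup

variable {n : ℕ}

theorem isReduced_invRev {L : List (Fin n × Bool)} (h : IsReduced L) :
    IsReduced (invRev L) := by
  rw [isReduced_iff_reduce_eq] at *
  rw [reduce_invRev, h]

theorem norm_mk_of_reduced {L : List (Fin n × Bool)} (h : IsReduced L) :
    (FreeGroup.mk L).toWord.length = L.length := by
  rw [toWord_mk, h.reduce_eq]

theorem finite_short (M : ℕ) : {v : FreeGroup (Fin n) | v.toWord.length < M}.Finite :=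
  (List.finite_length_lt (Fin n × Bool) M).preimage toWord_injective.injOn

theorem exists_depth {A : Set (FreeGroup (Fin n))}
    (hA : ∀ s : FreeGroup (Fin n), {v | ¬(s * v ∈ A ↔ v ∈ A)}.Finite) :
    ∃ M : ℕ, ∀ P L : List (Fin n × Bool), M ≤ L.length → IsReduced (P ++ L) →
      (FreeGroup.mk (P ++ L) ∈ A ↔ FreeGroup.mk L ∈ A) := by
  have hfin : (⋃ x : Fin n × Bool, {v | ¬(FreeGroup.mk [x] * v ∈ A ↔ v ∈ A)}).Finite :=
    Set.finite_iUnion fun x => hA _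
  obtain ⟨M, hM⟩ := (hfin.image fun v => v.toWord.length).bddAbove
  refine ⟨M + 1, fun P => ?_⟩
  induction P with
  | nil => simp
  | cons x P ih =>
    intro L hL hred
    have hred' : IsReduced (P ++ L) := hred.infix ⟨[x], [], by simp⟩
    rw [← ih L hL hred']
    by_contra hc
    have : (FreeGroup.mk (P ++ L)).toWord.length ≤ M := by
      refine hM ⟨_, Set.mem_iUnion.2 ⟨x, ?_⟩, rfl⟩
      simpa using hc
    rw [norm_mk_of_reduced hred', List.length_append] at this
    omega

theorem exists_cut {A : Set (FreeGroup (Fin n))}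
    (hA : ∀ s : FreeGroup (Fin n), {v | ¬(s * v ∈ A ↔ v ∈ A)}.Finite)
    (hi : A.Infinite) (hci : Aᶜ.Infinite) :
    ∃ (M : ℕ) (Y R R' : List (Fin n × Bool)) (c c' : Fin n × Bool),
      IsReduced (R ++ c :: Y) ∧ IsReduced (R' ++ c' :: Y) ∧
      M ≤ (R ++ c :: Y).length ∧ M ≤ (R' ++ c' :: Y).length ∧
      FreeGroup.mk (R ++ c :: Y) ∈ A ∧ FreeGroup.mk (R' ++ c' :: Y) ∉ A ∧
      ∀ d P P', IsReduced (P ++ d :: Y) → IsReduced (P' ++ d :: Y) →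
        M ≤ (P ++ d :: Y).length → M ≤ (P' ++ d :: Y).length →
        (FreeGroup.mk (P ++ d :: Y) ∈ A ↔ FreeGroup.mk (P' ++ d :: Y) ∈ A) := by
  classical
  obtain ⟨M, hM⟩ := exists_depth hA
  let Q : ℕ → Prop := fun N => ∀ Y : List (Fin n × Bool), Y.length = N → ∀ P P',
    IsReduced (P ++ Y) → IsReduced (P' ++ Y) → M ≤ (P ++ Y).length → M ≤ (P' ++ Y).length →
      FreeGroup.mk (P ++ Y) ∈ A → FreeGroup.mk (P' ++ Y) ∈ A
  have hQM : ∀ N, M ≤ N → Q N := by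
    intro N hN Y hY P P' h1 h2 _ _ h5
    rw [hM P' Y (by omega) h2]
    rwa [hM P Y (by omega) h1] at h5
  have hQ0 : ¬ Q 0 := by
    intro h
    obtain ⟨v, hv, hvM⟩ := (hi.sdiff (finite_short M)).nonempty
    obtain ⟨v', hv', hvM'⟩ := (hci.sdiff (finite_short M)).nonempty
    apply hv'
    have := h [] rfl v.toWord v'.toWord (by simpa using isReduced_toWord)
      (by simpa using isReduced_toWord) (by simpa using hvM) (by simpa using hvM')
    simp only [List.append_nil, mk_toWord] at this
    exact this hv
  have hex : ∃ N, Q N := ⟨M, hQM M le_rfl⟩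
  have hspec := Nat.find_spec hex
  have hmin := fun m => Nat.find_min hex (m := m)
  generalize Nat.find hex = N at *
  obtain _ | N := N
  · exact absurd hspec hQ0
  have hnot := hmin N (Nat.lt_succ_self N)
  have hNM : N < M := by
    by_contra hc
    exact hnot (hQM N (by omega))
  simp only [Q] at hnot
  push Not at hnot
  obtain ⟨Y, hY, P, P', h1, h2, h3, h4, h5, h6⟩ := hnot
  have hne : P ≠ [] := by rintro rfl; simp at h3; omega
  have hne' : P' ≠ [] := by rintro rfl; simp at h4; omega
  obtain ⟨R, c, rfl⟩ := (List.eq_nil_or_concat' P).resolve_left hne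
  obtain ⟨R', c', rfl⟩ := (List.eq_nil_or_concat' P').resolve_left hne'
  simp only [List.append_assoc, List.cons_append, List.nil_append] at h1 h2 h3 h4 h5 h6
  refine ⟨M, Y, R, R', c, c', h1, h2, h3, h4, h5, h6, ?_⟩
  intro d P P' g1 g2 g3 g4
  exact ⟨hspec (d :: Y) (by simp [hY]) P P' g1 g2 g3 g4,
    hspec (d :: Y) (by simp [hY]) P' P g2 g1 g4 g3⟩

theorem mk_flatten_replicate (W : List (Fin n × Bool)) (k : ℕ) :
    FreeGroup.mk (List.replicate k W).flatten = FreeGroup.mk W ^ k := by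
  induction k with
  | zero => simp [FreeGroup.one_eq_mk]
  | succ k ih => rw [List.replicate_succ, List.flatten_cons, ← mul_mk, ih, pow_succ']

theorem length_le_flatten_replicate (W : List (Fin n × Bool)) (hW : W ≠ []) (k : ℕ) :
    k ≤ (List.replicate k W).flatten.length := by
  have := List.length_pos_iff.2 hW
  simp
  nlinarith

theorem line_lemma {A : Set (FreeGroup (Fin n))} {W : List (Fin n × Bool)}
    (hW : IsCyclicallyReduced W) (hA : SepWitness (FreeGroup.mk W) A)
    {α β : List (Fin n × Bool)} {a b : Fin n × Bool} (hab : W = α ++ a :: b :: β)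
    {Y : List (Fin n × Bool)} (ha : IsReduced (a :: Y)) (hb : IsReduced ((b.1, !b.2) :: Y))
    (M : ℕ) :
    ∃ P P', IsReduced (P ++ a :: Y) ∧ IsReduced (P' ++ (b.1, !b.2) :: Y) ∧
      M ≤ (P ++ a :: Y).length ∧ M ≤ (P' ++ (b.1, !b.2) :: Y).length ∧
      (FreeGroup.mk (P ++ a :: Y) ∈ A ↔ FreeGroup.mk (P' ++ (b.1, !b.2) :: Y) ∈ A) := by
  have hne : W ≠ [] := by rw [hab]; simp
  have hlen := length_le_flatten_replicate W hne M
  have hredk : IsReduced (List.replicate (M + 1) W).flatten := (hW.flatten_replicate _).isReduced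
  have hmk := mk_flatten_replicate W M
  have e1 : (List.replicate (M + 1) W).flatten = (List.replicate M W).flatten ++ W := by
    rw [List.replicate_succ', List.flatten_concat]
  have e2 : (List.replicate (M + 1) W).flatten = W ++ (List.replicate M W).flatten := by
    rw [List.replicate_succ, List.flatten_cons]
  generalize (List.replicate M W).flatten = V at *
  refine ⟨V ++ α, invRev (β ++ V), ?_, ?_, ?_, ?_, ?_⟩
  · have h1 : IsReduced ((V ++ α) ++ [a]) := by
      refine hredk.infix ⟨[], b :: β, ?_⟩
      rw [e1, hab]; simp
    simpa using IsReduced.append_overlap (L₃ := Y) h1 (by simpa using ha) (by simp)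
  · have h1 : IsReduced (b :: (β ++ V)) := by
      refine hredk.infix ⟨α ++ [a], [], ?_⟩
      rw [e2, hab]; simp
    have h2 : IsReduced (invRev (β ++ V) ++ [(b.1, !b.2)]) := by
      have := isReduced_invRev h1
      rw [invRev_cons] at this
      simpa [invRev] using this
    simpa using IsReduced.append_overlap (L₃ := Y) h2 (by simpa using hb) (by simp)
  · simp; omega
  · simp; omega
  · set h : FreeGroup (Fin n) := (FreeGroup.mk (b :: β))⁻¹ * FreeGroup.mk Y with hh
    have f1 : FreeGroup.mk (V ++ α ++ a :: Y) = FreeGroup.mk W ^ (M + 1) * h := by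
      have t1 : FreeGroup.mk (V ++ α ++ a :: Y)
          = FreeGroup.mk V * FreeGroup.mk (α ++ [a]) * FreeGroup.mk Y := by simp [mul_mk]
      have t2 : FreeGroup.mk W = FreeGroup.mk (α ++ [a]) * FreeGroup.mk (b :: β) := by
        rw [hab]; simp [mul_mk]
      rw [t1, hmk, pow_succ, hh]
      nth_rewrite 3 [t2]
      group
    have f2 : FreeGroup.mk (invRev (β ++ V) ++ (b.1, !b.2) :: Y)
        = (FreeGroup.mk W)⁻¹ ^ M * h := by
      have t1 : FreeGroup.mk (invRev (β ++ V) ++ (b.1, !b.2) :: Y)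
          = (FreeGroup.mk (b :: β) * FreeGroup.mk V)⁻¹ * FreeGroup.mk Y := by
        rw [mul_mk, inv_mk, mul_mk, List.cons_append, invRev_cons]
        simp [invRev]
      rw [t1, hmk, hh, mul_inv_rev, mul_assoc, inv_pow]
    rw [f1, f2, hA.pow, hA.inv.pow]

theorem no_full_word (hn : 2 ≤ n) {A : Set (FreeGroup (Fin n))} {W : List (Fin n × Bool)}
    (hW : IsCyclicallyReduced W) (hA : SepWitness (FreeGroup.mk W) A)
    (hfull : ∀ i j : Fin n, ∃ α β, W = α ++ (i, true) :: (j, true) :: β) : False := by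
  obtain ⟨M, Y, R, R', c, c', h1, h2, h3, h4, h5, h6, h7⟩ := exists_cut hA.1 hA.2.1 hA.2.2.1
  have : Nontrivial (Fin n) := Fin.nontrivial_iff_two_le.2 hn
  let col : Fin n × Bool → Prop := fun d => ∃ P, IsReduced (P ++ d :: Y) ∧
    M ≤ (P ++ d :: Y).length ∧ FreeGroup.mk (P ++ d :: Y) ∈ A
  have hc : col c := ⟨R, h1, h3, h5⟩
  have hc' : ¬ col c' := by
    rintro ⟨P, g1, g2, g3⟩
    exact h6 ((h7 c' P R' g1 h2 g2 h4).1 g3)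
  have rc : IsReduced (c :: Y) := h1.infix ⟨R, [], by simp⟩
  have rc' : IsReduced (c' :: Y) := h2.infix ⟨R', [], by simp⟩
  have rY : IsReduced Y := rc.infix ⟨[c], [], by simp⟩
  have key : ∀ i j : Fin n, IsReduced ((i, true) :: Y) → IsReduced ((j, false) :: Y) →
      (col (i, true) ↔ col (j, false)) := by
    intro i j hi hj
    obtain ⟨α, β, hab⟩ := hfull i j
    obtain ⟨P, P', g1, g2, g3, g4, g5⟩ := line_lemma hW hA hab (Y := Y) hi hj M
    constructor
    · rintro ⟨P₁, k1, k2, k3⟩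
      exact ⟨P', g2, g4, g5.1 ((h7 _ _ _ k1 g1 k2 g3).1 k3)⟩
    · rintro ⟨P₁, k1, k2, k3⟩
      exact ⟨P, g1, g3, g5.2 ((h7 _ _ _ k1 g2 k2 g4).1 k3)⟩
  have hall : ∀ s : Bool, ∃ i : Fin n, IsReduced ((i, s) :: Y) := by
    intro s
    cases Y with
    | nil => exact ⟨⟨0, by omega⟩, by simp⟩
    | cons y Y =>
      obtain ⟨i, hi⟩ := exists_ne y.1
      exact ⟨i, by rw [isReduced_cons_cons]; exact ⟨fun h => absurd h hi, rY⟩⟩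
  obtain ⟨p, hp⟩ := hall true
  obtain ⟨q, hq⟩ := hall false
  obtain ⟨i, s⟩ := c
  obtain ⟨j, t⟩ := c'
  cases s <;> cases t
  · exact hc' ((key p j hp rc').1 ((key p i hp rc).2 hc))
  · exact hc' ((key j i rc' rc).2 hc)
  · exact hc' ((key i j rc rc').1 hc)
  · exact hc' ((key j q rc' hq).2 ((key i q rc hq).1 hc))

end Cut

/-! ### Counting quasimorphisms -/

section Count

open FreeGroup

/-- number of occurrences of `u` in `L` (as a nonempty starting position) -/
def occ {X : Type*} [DecidableEq X] (u : List X) : List X → ℕ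
  | [] => 0
  | x :: L => occ u L + if u <+: x :: L then 1 else 0

theorem occ_append_ge {X : Type*} [DecidableEq X] (u p q : List X) :
    occ u p + occ u q ≤ occ u (p ++ q) := by
  induction p with
  | nil => simp [occ]
  | cons x p ih =>
    simp only [List.cons_append, occ]
    by_cases h : u <+: x :: p
    · have : u <+: x :: (p ++ q) := h.trans ⟨q, by simp⟩
      simp only [h, this, if_true]; omega
    · simp only [h, if_false]; omega

theorem occ_append_le {X : Type*} [DecidableEq X] (u p q : List X) :
    occ u (p ++ q) ≤ occ u p + occ u q + min p.length u.length := by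
  induction p with
  | nil => simp [occ]
  | cons x p ih =>
    simp only [List.cons_append, occ, List.length_cons]
    by_cases hl : u.length ≤ p.length + 1
    · have : u <+: x :: (p ++ q) ↔ u <+: x :: p := by
        rw [← List.cons_append]
        constructor
        · intro h
          exact List.prefix_of_prefix_length_le h ⟨q, rfl⟩ (by simpa using hl)
        · intro h
          exact h.trans ⟨q, rfl⟩
      simp only [this]; omega
    · split_ifs <;> omega

theorem occ_concat {X : Type*} [DecidableEq X] (u L : List X) (x : X) :
    occ u (L ++ [x]) = occ u L + if u <:+ L ++ [x] then 1 else 0 := by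
  induction L with
  | nil =>
    have : u <+: [x] ↔ u <:+ [x] := by
      rcases u with _ | ⟨a, _ | ⟨b, u⟩⟩
      · simp
      · simp [List.cons_prefix_cons, List.suffix_cons_iff]
      · constructor <;> intro h <;> have := h.length_le <;> simp at this
    simp [occ, this]
  | cons y L ih =>
    simp only [List.cons_append, occ, ih]
    rcases le_or_gt u.length (L.length + 1) with hl | hl
    · have h1 : u <+: y :: (L ++ [x]) ↔ u <+: y :: L := by
        rw [← List.cons_append]
        exact ⟨fun h => List.prefix_of_prefix_length_le h ⟨[x], rfl⟩ (by simpa using hl),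
          fun h => h.trans ⟨[x], rfl⟩⟩
      have h2 : u <:+ y :: (L ++ [x]) ↔ u <:+ L ++ [x] :=
        ⟨fun h => List.suffix_of_suffix_length_le h ⟨[y], rfl⟩ (by simpa using hl),
          fun h => h.trans ⟨[y], rfl⟩⟩
      simp only [h1, h2]; omega
    · have h1 : ¬ u <+: y :: L := fun h => by have := h.length_le; simp at this; omega
      have h2 : ¬ u <:+ L ++ [x] := fun h => by have := h.length_le; simp at this; omega
      have h3 : u <+: y :: (L ++ [x]) ↔ u <:+ y :: (L ++ [x]) := by
        constructor
        · intro h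
          rw [h.eq_of_length_le (by simp only [List.length_cons, List.length_append, List.length_nil]; omega)]
        · intro h
          rw [h.eq_of_length_le (by simp only [List.length_cons, List.length_append, List.length_nil]; omega)]
      simp only [h1, h2, h3, if_false]

theorem occ_reverse {X : Type*} [DecidableEq X] (u L : List X) :
    occ u.reverse L.reverse = occ u L := by
  induction L with
  | nil => simp [occ]
  | cons x L ih =>
    rw [List.reverse_cons, occ_concat, ih, occ, ← List.reverse_cons]
    simp only [List.reverse_suffix]

theorem occ_map {X : Type*} [DecidableEq X] (f : X → X) (hf : Function.Injective f)
    (u L : List X) : occ (u.map f) (L.map f) = occ u L := by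
  induction L with
  | nil => simp [occ]
  | cons x L ih =>
    rw [List.map_cons, occ, ih, occ, ← List.map_cons]
    have : u.map f <+: (x :: L).map f ↔ u <+: x :: L := by
      constructor
      · intro h
        rw [List.prefix_map_iff] at h
        obtain ⟨l, hl, h2⟩ := h
        rwa [hf.list_map h2]
      · exact fun h => h.map f
    simp only [this]

variable {n : ℕ}

theorem occ_invRev (u L : List (Fin n × Bool)) : occ (invRev u) (invRev L) = occ u L := by
  unfold invRev
  rw [occ_reverse, occ_map]
  rintro ⟨a, b⟩ ⟨c, d⟩ h
  simpa using h

theorem occ_pos {X : Type*} [DecidableEq X] {u L : List X} (h : occ u L ≠ 0) : u <:+: L := by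
  induction L with
  | nil => simp [occ] at h
  | cons x L ih =>
    rw [occ] at h
    by_cases h1 : u <+: x :: L
    · exact h1.isInfix
    · simp only [h1, if_false, add_zero] at h
      exact (ih h).trans ⟨[x], [], by simp⟩

/-- difference of the numbers of occurrences of `u` and of its inverse -/
def qm (u L : List (Fin n × Bool)) : ℤ := (occ u L : ℤ) - occ (invRev u) L

theorem qm_invRev (u L : List (Fin n × Bool)) : qm u (invRev L) = - qm u L := by
  have h1 := occ_invRev u L
  have h2 := occ_invRev (invRev u) L
  rw [invRev_invRev] at h2
  simp only [qm, h1, h2]; ring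

theorem qm_append (u p q : List (Fin n × Bool)) :
    |qm u (p ++ q) - qm u p - qm u q| ≤ u.length := by
  have h1 := occ_append_ge u p q
  have h2 := occ_append_le u p q
  have h3 := occ_append_ge (invRev u) p q
  have h4 := occ_append_le (invRev u) p q
  rw [invRev_length] at h4
  rw [abs_le]
  simp only [qm]
  omega

theorem cancel_decomp (L₁ : List (Fin n × Bool)) : ∀ L₂ : List (Fin n × Bool),
    IsReduced L₁ → IsReduced L₂ → ∃ p r q, L₁ = p ++ r ∧ L₂ = invRev r ++ q ∧
      reduce (L₁ ++ L₂) = p ++ q := by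
  induction L₁ using List.reverseRecOn with
  | nil =>
    intro L₂ _ h2
    exact ⟨[], [], L₂, by simp, by simp, by simp [h2.reduce_eq]⟩
  | append_singleton L a ih =>
    intro L₂ h1 h2
    have hL : IsReduced L := h1.infix ⟨[], [a], by simp⟩
    cases L₂ with
    | nil => exact ⟨L ++ [a], [], [], by simp, by simp, by simp [h1.reduce_eq]⟩
    | cons b L₂ =>
      by_cases hab : a.1 = b.1 → a.2 = b.2
      · refine ⟨L ++ [a], [], b :: L₂, by simp, by simp, ?_⟩
        apply IsReduced.reduce_eq
        have h3 : IsReduced ([a] ++ b :: L₂) := by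
          simpa [isReduced_cons_cons] using ⟨hab, h2⟩
        exact IsReduced.append_overlap h1 h3 (by simp)
      · push Not at hab
        obtain ⟨p, r, q, e1, e2, e3⟩ := ih L₂ hL (h2.infix ⟨[b], [], by simp⟩)
        have hb : b = (a.1, !a.2) := by
          obtain ⟨x, s⟩ := a
          obtain ⟨y, t⟩ := b
          obtain ⟨h, h'⟩ := hab
          simp only at h h'
          subst h
          cases s <;> cases t <;> simp_all
        refine ⟨p, r ++ [a], q, by simp [e1], ?_, ?_⟩
        · rw [e2, hb]; simp [invRev]
        · rw [← e3]
          apply reduce.Step.eq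
          rw [hb]
          simpa using Red.Step.not (L₁ := L) (L₂ := L₂) (x := a.1) (b := a.2)

/-- the counting quasimorphism on the free group -/
def QM (u : List (Fin n × Bool)) (g : FreeGroup (Fin n)) : ℤ := qm u g.toWord

theorem QM_mul (u : List (Fin n × Bool)) (g h : FreeGroup (Fin n)) :
    |QM u (g * h) - QM u g - QM u h| ≤ 3 * u.length := by
  obtain ⟨p, r, q, e1, e2, e3⟩ := cancel_decomp g.toWord h.toWord isReduced_toWord isReduced_toWord
  have h1 := qm_append u p q
  have h2 := qm_append u p r
  have h3 := qm_append u (invRev r) q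
  have h4 := qm_invRev u r
  unfold QM
  rw [toWord_mul, e3, e1, e2]
  rw [abs_le] at *
  omega

theorem QM_inv (u : List (Fin n × Bool)) (g : FreeGroup (Fin n)) : QM u g⁻¹ = - QM u g := by
  unfold QM
  rw [toWord_inv, qm_invRev]

theorem QM_sep (hn : 2 ≤ n) (u : List (Fin n × Bool))
    (hu : ∀ i j : Fin n, ∃ α β, u = α ++ (i, true) :: (j, true) :: β)
    (g : FreeGroup (Fin n)) (hg : IsSeparableElt g) : |QM u g| ≤ 6 * u.length := by
  obtain ⟨A, hA⟩ := exists_sepWitness hg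
  set W := reduceCyclically g.toWord with hWdef
  set c := reduceCyclically.conjugator g.toWord with hc
  have hW : IsCyclicallyReduced W := reduceCyclically.isCyclicallyReduced isReduced_toWord
  have hconj := reduceCyclically.conj_conjugator_reduceCyclically g.toWord
  rw [← hWdef, ← hc] at hconj
  have hg' : g = FreeGroup.mk c * FreeGroup.mk W * (FreeGroup.mk c)⁻¹ := by
    rw [inv_mk, mul_mk, mul_mk, hconj, mk_toWord]
  have hA' := hA.conj (FreeGroup.mk c)
  have hw : (FreeGroup.mk c)⁻¹ * g * FreeGroup.mk c = FreeGroup.mk W := by rw [hg']; group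
  rw [hw] at hA'
  have full : ∀ V, IsCyclicallyReduced V → (∃ A, SepWitness (FreeGroup.mk V) A) → occ u V = 0 := by
    rintro V hV ⟨A, hA⟩
    by_contra h
    obtain ⟨s, t, hst⟩ := occ_pos h
    refine no_full_word hn hV hA fun i j => ?_
    obtain ⟨α, β, h⟩ := hu i j
    exact ⟨s ++ α, β ++ t, by rw [← hst, h]; simp⟩
  have z1 : occ u W = 0 := full W hW ⟨_, hA'⟩
  have z2 : occ (invRev u) W = 0 := by
    have hWi : IsCyclicallyReduced (invRev W) := by
      refine ⟨isReduced_invRev hW.1, ?_⟩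
      intro a ha b hb hab
      simp only [invRev, List.getLast?_reverse, List.head?_reverse, List.head?_map,
        List.getLast?_map, Option.mem_def, Option.map_eq_some_iff] at ha hb
      obtain ⟨a', ha', rfl⟩ := ha
      obtain ⟨b', hb', rfl⟩ := hb
      have := hW.2 b' hb' a' ha' hab.symm
      simp [this]
    have := full (invRev W) hWi ⟨_, by rw [← inv_mk]; exact hA'.inv⟩
    rw [← occ_invRev, invRev_invRev]
    exact this
  have z : QM u (FreeGroup.mk W) = 0 := by
    simp [QM, toWord_mk, hW.1.reduce_eq, qm, z1, z2]
  have q1 := QM_mul u (FreeGroup.mk c * FreeGroup.mk W) (FreeGroup.mk c)⁻¹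
  have q2 := QM_mul u (FreeGroup.mk c) (FreeGroup.mk W)
  rw [← hg', QM_inv] at q1
  rw [z] at q2
  rw [abs_le] at *
  omega

theorem QM_list (u : List (Fin n × Bool)) (l : List (FreeGroup (Fin n))) (C : ℕ)
    (hl : ∀ a ∈ l, |QM u a| ≤ C) : |QM u l.prod| ≤ l.length * (C + 3 * u.length) := by
  induction l with
  | nil => simp [QM, qm, occ]
  | cons a l ih =>
    have h1 := ih fun b hb => hl b (List.mem_cons_of_mem _ hb)
    have h2 := hl a List.mem_cons_self
    have h3 := QM_mul u a l.prod
    rw [List.prod_cons, List.length_cons]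
    push_cast
    rw [add_mul, one_mul]
    generalize (l.length : ℤ) * (C + 3 * u.length) = D at *
    rw [abs_le] at *
    omega

theorem isReduced_of_pos {L : List (Fin n × Bool)} (h : ∀ x ∈ L, x.2 = true) : IsReduced L := by
  induction L with
  | nil => simp
  | cons a L ih =>
    cases L with
    | nil => simp
    | cons b L =>
      rw [isReduced_cons_cons]
      refine ⟨fun _ => ?_, ih fun x hx => h x (List.mem_cons_of_mem _ hx)⟩
      rw [h a (by simp), h b (by simp)]

theorem QM_pow (u : List (Fin n × Bool)) (hne : u ≠ []) (hpos : ∀ x ∈ u, x.2 = true) (k : ℕ) :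
    (k : ℤ) ≤ QM u (FreeGroup.mk u ^ k) := by
  rw [← mk_flatten_replicate]
  have hp : ∀ x ∈ (List.replicate k u).flatten, x.2 = true := by
    intro x hx
    simp only [List.mem_flatten, List.mem_replicate] at hx
    obtain ⟨l, ⟨-, rfl⟩, hx⟩ := hx
    exact hpos x hx
  have h0 : occ (invRev u) (List.replicate k u).flatten = 0 := by
    by_contra h
    obtain ⟨x, hx⟩ := List.exists_mem_of_ne_nil u hne
    have hm : (x.1, !x.2) ∈ invRev u := by
      simp only [invRev, List.mem_reverse, List.mem_map]
      exact ⟨x, hx, rfl⟩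
    have := hp _ ((occ_pos h).subset hm)
    simp [hpos x hx] at this
  have h1 : k ≤ occ u (List.replicate k u).flatten := by
    have hu : 1 ≤ occ u u := by
      cases u with
      | nil => exact absurd rfl hne
      | cons a u => simp [occ]
    clear h0 hp
    induction k with
    | zero => simp
    | succ k ih =>
      rw [List.replicate_succ, List.flatten_cons]
      have := occ_append_ge u u (List.replicate k u).flatten
      omega
  unfold QM
  rw [toWord_mk, (isReduced_of_pos hp).reduce_eq, qm, h0]
  simpa using h1

theorem exists_full (n : ℕ) : ∃ u : List (Fin n × Bool), (∀ x ∈ u, x.2 = true) ∧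
    ∀ i j : Fin n, ∃ α β, u = α ++ (i, true) :: (j, true) :: β := by
  refine ⟨((List.finRange n ×ˢ List.finRange n).map
    fun p => [(p.1, true), (p.2, true)]).flatten, ?_, ?_⟩
  · intro x hx
    simp only [List.mem_flatten, List.mem_map] at hx
    obtain ⟨l, ⟨p, -, rfl⟩, hx⟩ := hx
    simp only [List.mem_cons, List.not_mem_nil, or_false] at hx
    rcases hx with rfl | rfl <;> rfl
  · intro i j
    have hm : (i, j) ∈ List.finRange n ×ˢ List.finRange n := by simp
    obtain ⟨s, t, hst⟩ := List.append_of_mem hm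
    rw [hst]
    exact ⟨(s.map fun p => [(p.1, true), (p.2, true)]).flatten,
      (t.map fun p => [(p.1, true), (p.2, true)]).flatten, by simp⟩

end Count

/-- For `n ≥ 2`, there is no uniform bound on the number of separable factors
needed to express elements of `F_n`. -/
theorem no_uniform_separable_bound (n : ℕ) (hn : 2 ≤ n) (B : ℕ) :
    ∃ w : FreeGroup (Fin n),
      ¬∃ l : List (FreeGroup (Fin n)),
        l.length ≤ B ∧ (∀ a ∈ l, IsSeparableElt a ∧ a ≠ 1) ∧ l.prod = w := by
  obtain ⟨u, hpos, hu⟩ := exists_full n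
  have hne : u ≠ [] := by
    obtain ⟨α, β, h⟩ := hu ⟨0, by omega⟩ ⟨0, by omega⟩
    rw [h]; simp
  refine ⟨FreeGroup.mk u ^ (B * (9 * u.length) + 1), ?_⟩
  rintro ⟨l, hl, hsep, hprod⟩
  have h1 := QM_pow u hne hpos (B * (9 * u.length) + 1)
  have h2 := QM_list u l (6 * u.length) fun a ha => by
    have := QM_sep hn u hu a (hsep a ha).1
    push_cast
    exact this
  rw [hprod] at h2
  have h3 : ((l.length : ℤ)) * ((6 * u.length : ℕ) + 3 * u.length) ≤ B * (9 * u.length) := by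
    push_cast
    have : (l.length : ℤ) ≤ B := by exact_mod_cast hl
    have h4 : (0 : ℤ) ≤ u.length := by positivity
    nlinarith
  have h5 := le_of_abs_le h2
  push_cast at h1 h3 h5
  linarith
end
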